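/- arXiv:1601.00506 — 2 statements merged into one kernel-verified Lean document; each statement's English description precedes it below -/
import Mathlib

section
/- For every path graph P on n ≥ 4 vertices, there exists a set F of exactly ⌈(n+2)/2⌉ unordered pairs of distinct vertices of P that are not edges of P such that the graph P + F is 3-vertex-connected. -/
/-!
A tree of maximum degree at most two is a path graph: a longest path cannot be left through an end
(it would be prolonged) nor through an inner vertex (its two neighbours on the path use up its
degree), so it spans. Number the vertices `0, …, n - 1` along it and put `m = ⌊n / 2⌋`. The
augmenting set consists of the edge between `0` and `n - 1`, which closes a Hamiltonian cycle, and
the `⌈n / 2⌉` chords between `i` and `i + m`; for even `n` the result is the Möbius ladder.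

Deleting two vertices splits the cycle into two arcs, each still connected. The shorter arc, if
nonempty, has at most `m - 1` vertices, so the chord at one of its end vertices leaves it without
hitting a deleted vertex, and therefore joins the two arcs.
-/

/-- The degree of a vertex `v` in a simple graph `G`, as the cardinality of its
neighbor set. -/
noncomputable def degN {V : Type*} (G : SimpleGraph V) (v : V) : ℕ :=
  (G.neighborSet v).ncard

/-- A finite simple graph is 3-vertex-connected if removing any set of at most two
vertices leaves a connected induced subgraph. -/
def ThreeConnected {V : Type*} [Fintype V] (G : SimpleGraph V) : Prop :=
  ∀ S : Finset V, S.card ≤ 2 → (G.induce ((S : Set V)ᶜ)).Connected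

section

open SimpleGraph

variable {V W : Type*} {G : SimpleGraph V} {H : SimpleGraph W}

theorem mem_support_of_adj_getVert [Finite V] {u v b : V} {p : G.Walk u v} (hp : p.IsPath)
    {i : ℕ} (hi₀ : i ≠ 0) (hi : i < p.length) (hdeg : degN G (p.getVert i) ≤ 2)
    (hb : G.Adj (p.getVert i) b) : b ∈ p.support := by
  have hnbr : p.toSubgraph.neighborSet (p.getVert i) = G.neighborSet (p.getVert i) :=
    Set.eq_of_subset_of_ncard_le (p.toSubgraph.neighborSet_subset _)
      (hdeg.trans (hp.ncard_neighborSet_toSubgraph_internal_eq_two hi₀ hi).ge)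
  have hpb : p.toSubgraph.Adj (p.getVert i) b := hnbr.ge hb
  exact p.mem_support_of_adj_toSubgraph hpb.symm

theorem mem_support_of_adj_of_longest [Finite V] (hdeg : ∀ x, degN G x ≤ 2) {u v a b : V}
    {p : G.Walk u v} (hp : p.IsPath)
    (hmax : ∀ (u' v' : V) (q : G.Walk u' v'), q.IsPath → q.length ≤ p.length)
    (ha : a ∈ p.support) (hab : G.Adj a b) : b ∈ p.support := by
  obtain ⟨i, rfl, hi⟩ := Walk.mem_support_iff_exists_getVert.1 ha
  by_contra hb
  rcases eq_or_ne i 0 with rfl | hi₀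
  · rw [p.getVert_zero] at hab
    simpa using hmax _ _ _ (hp.cons (h := hab.symm) hb)
  rcases hi.eq_or_lt with rfl | hi
  · rw [p.getVert_length] at hab
    simpa using hmax _ _ _ (hp.concat hb hab)
  · exact hb (mem_support_of_adj_getVert hp hi₀ hi (hdeg _) hab)

theorem exists_isPath_forall_mem_support [Finite V] (hG : G.Connected)
    (hdeg : ∀ x, degN G x ≤ 2) :
    ∃ (u v : V) (p : G.Walk u v), p.IsPath ∧ ∀ x, x ∈ p.support := by
  have := hG.nonempty
  obtain ⟨u, v, p, hp, hmax⟩ := Walk.exists_isPath_forall_isPath_length_le_length G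
  refine ⟨u, v, p, hp, fun x ↦ by_contra fun hx ↦ ?_⟩
  obtain ⟨q⟩ := hG.preconnected u x
  obtain ⟨d, -, hd₁, hd₂⟩ := q.exists_boundary_dart {y | y ∈ p.support} p.start_mem_support hx
  exact hd₂ (mem_support_of_adj_of_longest hdeg hp hmax hd₁ d.adj)

theorem nonempty_iso_of_bijective_hom (hG : G.Connected) (hH : H.IsTree) (f : G →g H)
    (hf : Function.Bijective f) : Nonempty (G ≃g H) := by
  let e : V ≃ W := Equiv.ofBijective f hf
  have hle : G.map e ≤ H :=
    (map_le_iff_le_comap e.toEmbedding G H).2 fun _ _ hab ↦ f.map_adj hab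
  have hconn : (G.map e).Connected := (Iso.map e G).connected_iff.1 hG
  have heq : G.map e = H := (isTree_iff_minimal_connected.1 hH).eq_of_le hconn hle
  exact ⟨heq ▸ Iso.map e G⟩

theorem nonempty_pathGraph_iso [Fintype V] (hG : G.IsTree) (hdeg : ∀ v, degN G v ≤ 2) :
    Nonempty (pathGraph (Fintype.card V) ≃g G) := by
  classical
  obtain ⟨u, v, p, hp, hspan⟩ := exists_isPath_forall_mem_support hG.connected hdeg
  have hcard : p.length + 1 = Fintype.card V := by
    rw [← p.length_support, (hp.isHamiltonian_of_mem hspan).length_support]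
  have hbij : Function.Bijective hp.pathGraphCopy :=
    (Fintype.bijective_iff_injective_and_card _).2 ⟨hp.pathGraphCopy.injective, by simpa⟩
  exact hcard ▸ nonempty_iso_of_bijective_hom (pathGraph_connected _) hG hp.pathGraphCopy.toHom hbij

theorem ThreeConnected.of_bijective_hom [Fintype V] [Fintype W] (hG : ThreeConnected G)
    (f : G →g H) (hf : Function.Bijective f) : ThreeConnected H := by
  classical
  intro S hS
  let T : Finset V := S.preimage f hf.injective.injOn
  have hT : T.card ≤ 2 :=
    (Finset.card_le_card_of_injOn f (by simp [T, Set.MapsTo]) hf.injective.injOn).trans hS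
  have hmaps : Set.MapsTo f (T : Set V)ᶜ (S : Set W)ᶜ := fun x hx ↦ by simpa [T] using hx
  refine (hG T hT).map (induceHom f hmaps) ?_
  rintro ⟨y, hy⟩
  obtain ⟨x, rfl⟩ := hf.surjective y
  exact ⟨⟨x, by simpa [T] using hy⟩, rfl⟩

theorem threeConnected_of_forall_pair [Fintype V] (hV : 4 ≤ Fintype.card V)
    (h : ∀ a b, a ≠ b → (G.induce {a, b}ᶜ).Preconnected) : ThreeConnected G := by
  classical
  intro S hS
  have hnonempty : Nonempty ((S : Set V)ᶜ : Set V) := by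
    obtain ⟨x, hx⟩ := Finset.exists_mem_notMem_of_card_lt_card (s := S) (t := Finset.univ)
      (by rw [Finset.card_univ]; omega)
    exact ⟨x, by simpa using hx.2⟩
  refine ⟨fun x y ↦ ?_⟩
  have hSxy : S ⊆ {x.1, y.1}ᶜ := by
    rw [Finset.subset_compl_comm]
    exact Finset.insert_subset (Finset.mem_compl.2 x.2)
      (Finset.singleton_subset_iff.2 (Finset.mem_compl.2 y.2))
  have htwo : 2 ≤ ({x.1, y.1}ᶜ : Finset V).card := by
    have := Finset.card_le_two (a := x.1) (b := y.1)
    rw [Finset.card_compl]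
    omega
  obtain ⟨T, hST, hTxy, hT⟩ := Finset.exists_subsuperset_card_eq hSxy hS htwo
  obtain ⟨a, b, hab, rfl⟩ := Finset.card_eq_two.1 hT
  have hx : x.1 ∈ ({a, b} : Set V)ᶜ := by grind [Finset.mem_compl]
  have hy : y.1 ∈ ({a, b} : Set V)ᶜ := by grind [Finset.mem_compl]
  have hsub : ({a, b} : Set V)ᶜ ⊆ (S : Set V)ᶜ := by grind
  exact (h a b hab ⟨x, hx⟩ ⟨y, hy⟩).map (G.induceHomOfLE hsub).toHom

theorem preconnected_induce_hasse {α : Type*} [LinearOrder α] [SuccOrder α] [IsSuccArchimedean α]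
    (s : Set α) [s.OrdConnected] : ((hasse α).induce s).Preconnected := by
  have hle : hasse s ≤ (hasse α).induce s := fun a b hab ↦
    hab.imp (CovBy.image (OrderEmbedding.subtype _) · (by simpa))
      (CovBy.image (OrderEmbedding.subtype _) · (by simpa))
  exact (hasse_preconnected_of_succ s).mono hle

theorem preconnected_induce_union {s t : Set V} (hs : (G.induce s).Preconnected)
    (ht : (G.induce t).Preconnected)
    (hst : s.Nonempty → t.Nonempty → ∃ x ∈ s, ∃ y ∈ t, G.Adj x y) :
    (G.induce (s ∪ t)).Preconnected := by
  rcases s.eq_empty_or_nonempty with rfl | hs₀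
  · rwa [Set.empty_union]
  rcases t.eq_empty_or_nonempty with rfl | ht₀
  · rwa [Set.union_empty]
  obtain ⟨x, hx, y, hy, hxy⟩ := hst hs₀ ht₀
  exact (connected_induce_union hs ht hx hy hxy).preconnected

theorem cycleGraph_succ_eq_pathGraph_sup_edge (n : ℕ) :
    cycleGraph (n + 1) = pathGraph (n + 1) ⊔ edge 0 (Fin.last n) := by
  ext u v
  simp only [cycleGraph_adj', sup_adj, pathGraph_adj, edge_adj, Fin.ext_iff, Fin.val_zero,
    Fin.val_last, ne_eq]
  rcases lt_trichotomy u v with huv | rfl | hvu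
  · have := Fin.coe_sub_iff_lt.2 huv
    have := Fin.coe_sub_iff_le.2 huv.le
    omega
  · simp
  · have := Fin.coe_sub_iff_lt.2 hvu
    have := Fin.coe_sub_iff_le.2 hvu.le
    omega

theorem preconnected_induce_Iio_union_Ioi {n : ℕ} {G : SimpleGraph (Fin n)}
    (hG : cycleGraph n ≤ G) (a b : Fin n) :
    (G.induce (Set.Iio a ∪ Set.Ioi b)).Preconnected := by
  obtain _ | n := n
  · exact a.elim0
  have hpath : hasse (Fin (n + 1)) ≤ G := pathGraph_le_cycleGraph.trans hG
  refine preconnected_induce_union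
    ((preconnected_induce_hasse _).mono (comap_monotone _ hpath))
    ((preconnected_induce_hasse _).mono (comap_monotone _ hpath)) ?_
  rintro ⟨x, hx⟩ ⟨y, hy⟩
  have hx₀ : 0 < a := x.zero_le.trans_lt hx
  have hy₀ : b < Fin.last n := lt_of_lt_of_le hy y.le_last
  refine ⟨0, hx₀, Fin.last n, hy₀, hG ?_⟩
  have hne : (0 : Fin (n + 1)) ≠ Fin.last n := (b.zero_le.trans_lt hy₀).ne
  rw [cycleGraph_succ_eq_pathGraph_sup_edge]
  exact Or.inr ((edge_adj ..).2 ⟨Or.inl ⟨rfl, rfl⟩, hne⟩)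

theorem exists_antipodal_mem_Ioo {n : ℕ} {a b : Fin n} (hinner : (Set.Ioo a b).Nonempty)
    (houter : (Set.Iio a ∪ Set.Ioi b).Nonempty) :
    ∃ i ∈ Set.Ioo a b, ∃ j ∈ Set.Iio a ∪ Set.Ioi b,
      i.val + n / 2 = j.val ∨ j.val + n / 2 = i.val := by
  obtain ⟨x, hax, hxb⟩ := hinner
  obtain ⟨y, hy⟩ := houter
  simp only [Set.mem_union, Set.mem_Iio, Set.mem_Ioi, Set.mem_Ioo, Fin.lt_def] at *
  by_cases hshort : b.val - a.val ≤ n / 2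
  · refine ⟨⟨a + 1, by omega⟩, by grind, ?_⟩
    by_cases hright : a + 1 + n / 2 < n
    · exact ⟨⟨a + 1 + n / 2, hright⟩, by grind, by grind⟩
    · exact ⟨⟨a + 1 - n / 2, by omega⟩, by grind, by grind⟩
  · rcases hy with hya | hby
    · exact ⟨⟨a - 1 + n / 2, by omega⟩, by grind, ⟨a - 1, by omega⟩, by grind, by grind⟩
    · exact ⟨⟨b + 1 - n / 2, by omega⟩, by grind, ⟨b + 1, by omega⟩, by grind, by grind⟩

theorem threeConnected_of_cycleGraph_le {n : ℕ} (hn : 4 ≤ n) {G : SimpleGraph (Fin n)}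
    (hcycle : cycleGraph n ≤ G) (hchord : ∀ i j : Fin n, i.val + n / 2 = j.val → G.Adj i j) :
    ThreeConnected G := by
  have hlt : ∀ a b, a < b → (G.induce {a, b}ᶜ).Preconnected := by
    intro a b hab
    have harcs : ({a, b}ᶜ : Set (Fin n)) = Set.Ioo a b ∪ (Set.Iio a ∪ Set.Ioi b) := by
      ext i
      simp only [Set.mem_compl_iff, Set.mem_insert_iff, Set.mem_singleton_iff, Set.mem_union,
        Set.mem_Ioo, Set.mem_Iio, Set.mem_Ioi]
      omega
    rw [harcs]
    have hinner : (G.induce (Set.Ioo a b)).Preconnected :=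
      (preconnected_induce_hasse _).mono (comap_monotone _ (pathGraph_le_cycleGraph.trans hcycle))
    refine preconnected_induce_union hinner (preconnected_induce_Iio_union_Ioi hcycle a b) ?_
    intro hinner₀ houter₀
    obtain ⟨i, hi, j, hj, hij⟩ := exists_antipodal_mem_Ioo hinner₀ houter₀
    exact ⟨i, hi, j, hj, hij.elim (hchord i j) fun h ↦ (hchord j i h).symm⟩
  refine threeConnected_of_forall_pair (by simpa) fun a b hab ↦ ?_
  rcases hab.lt_or_gt with h | h
  · exact hlt a b h
  · exact Set.pair_comm a b ▸ hlt b a h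

/-- `G` becomes 3-vertex-connected by adding exactly `k` edges, none of them already in `G`. -/
def HasThreeConnectedAugmentation [Fintype V] (G : SimpleGraph V) (k : ℕ) : Prop :=
  ∃ F : Finset (Sym2 V),
    (∀ e ∈ F, ¬ e.IsDiag ∧ e ∉ G.edgeSet) ∧
    F.card = k ∧
    ThreeConnected (G ⊔ fromEdgeSet (F : Set (Sym2 V)))

theorem HasThreeConnectedAugmentation.of_iso [Fintype V] [Fintype W] {k : ℕ}
    (hG : HasThreeConnectedAugmentation G k) (e : G ≃g H) : HasThreeConnectedAugmentation H k := by
  obtain ⟨F, hnonedge, hcard, hconn⟩ := hG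
  let f : Sym2 V ↪ Sym2 W := ⟨Sym2.map e, Sym2.map.injective e.injective⟩
  refine ⟨F.map f, ?_, (F.card_map f).trans hcard, ?_⟩
  · simpa [f, Sym2.isDiag_map e.injective, e.map_mem_edgeSet_iff] using hnonedge
  · let g : G ⊔ fromEdgeSet (F : Set (Sym2 V)) →g H ⊔ fromEdgeSet (F.map f : Set (Sym2 W)) :=
      ⟨e, Or.imp e.map_adj_iff.2 fun ⟨hF, hne⟩ ↦
        ⟨Finset.mem_map_of_mem f hF, e.injective.ne hne⟩⟩
    exact hconn.of_bijective_hom g e.bijective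

/-- The chord of the `n`-cycle from `i` to `i + ⌊n / 2⌋`. -/
def antipodalChord (n : ℕ) (i : Fin (n - n / 2)) : Sym2 (Fin n) :=
  s(⟨i, by omega⟩, ⟨i + n / 2, by omega⟩)

theorem antipodalChord_injective (n : ℕ) : Function.Injective (antipodalChord n) := by
  intro i j hij
  simp only [antipodalChord, Sym2.eq_iff, Fin.mk.injEq] at hij
  omega

/-- The edges that turn the path `0, …, n` into a cycle with all its antipodal chords. -/
def mobiusEdges (n : ℕ) : Finset (Sym2 (Fin (n + 1))) :=
  insert s(0, Fin.last n) (Finset.univ.image (antipodalChord (n + 1)))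

theorem card_mobiusEdges {n : ℕ} (hn : 3 ≤ n) : (mobiusEdges n).card = (n + 1 + 2 + 1) / 2 := by
  have hclose : s(0, Fin.last n) ∉ Finset.univ.image (antipodalChord (n + 1)) := by
    simp only [antipodalChord, Finset.mem_image, Finset.mem_univ, true_and, Sym2.eq_iff,
      Fin.ext_iff, Fin.val_zero, Fin.val_last]
    omega
  rw [mobiusEdges, Finset.card_insert_of_notMem hclose,
    Finset.card_image_of_injective _ (antipodalChord_injective _), Finset.card_univ,
    Fintype.card_fin]
  omega

theorem not_isDiag_and_notMem_edgeSet_pathGraph {n : ℕ} {i j : Fin n} (hij : i.val + 1 < j.val) :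
    ¬ s(i, j).IsDiag ∧ s(i, j) ∉ (pathGraph n).edgeSet := by
  rw [Sym2.mk_isDiag_iff, mem_edgeSet, pathGraph_adj, Fin.ext_iff]
  omega

theorem hasThreeConnectedAugmentation_pathGraph {n : ℕ} (hn : 4 ≤ n) :
    HasThreeConnectedAugmentation (pathGraph n) ((n + 2 + 1) / 2) := by
  obtain ⟨n, rfl⟩ : ∃ k, n = k + 1 := ⟨n - 1, by omega⟩
  refine ⟨mobiusEdges n, ?_, card_mobiusEdges (by omega), ?_⟩
  · simp only [mobiusEdges, Finset.forall_mem_insert, Finset.forall_mem_image]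
    refine ⟨not_isDiag_and_notMem_edgeSet_pathGraph ?_, fun i _ ↦
      not_isDiag_and_notMem_edgeSet_pathGraph ?_⟩
    · rw [Fin.val_zero, Fin.val_last]
      omega
    · dsimp only
      omega
  · refine threeConnected_of_cycleGraph_le hn ?_ fun i j hij ↦ Or.inr ?_
    · rw [cycleGraph_succ_eq_pathGraph_sup_edge]
      exact sup_le_sup_left (fromEdgeSet_mono (by simp [mobiusEdges])) _
    · have hmem : s(i, j) ∈ mobiusEdges n := by
        refine Finset.mem_insert_of_mem (Finset.mem_image.2 ⟨⟨i, by omega⟩, Finset.mem_univ _, ?_⟩)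
        simp only [antipodalChord, hij]
      exact (fromEdgeSet_adj _).2 ⟨hmem, by omega⟩

end

/-- For every path graph `P` on `n ≥ 4` vertices there is an augmenting set of exactly
`⌈(n+2)/2⌉` non-edges whose addition makes the graph 3-vertex-connected. -/
theorem path_augmentation_three_connected
    {V : Type*} [Fintype V] (P : SimpleGraph V) (hP : P.IsTree)
    (hpath : ∀ v : V, degN P v ≤ 2)
    (hn : 4 ≤ Fintype.card V) :
    ∃ F : Finset (Sym2 V),
      (∀ e ∈ F, ¬ e.IsDiag ∧ e ∉ P.edgeSet) ∧
      F.card = (Fintype.card V + 2 + 1) / 2 ∧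
      ThreeConnected (P ⊔ SimpleGraph.fromEdgeSet (F : Set (Sym2 V))) := by
  obtain ⟨e⟩ := nonempty_pathGraph_iso hP hpath
  exact (hasThreeConnectedAugmentation_pathGraph hn).of_iso e
end

section
/- Let T be a finite tree on n ≥ 4 vertices with maximum degree at least 3, and let l1 and l2 denote the number of vertices of T of degree 1 and of degree 2, respectively. Then there exists a set F of exactly ⌈(2·l1 + l2)/2⌉ unordered pairs of distinct vertices of T that are not edges of T such that the graph T + F is 3-vertex-connected. -/
/-!
Call the demand of a graph the number of edge ends it lacks for all degrees to be at least 3. For a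
tree it is `2 l₁ + l₂`, so at least half of it, rounded up, must be added as edges. That this many
suffice is shown by induction on the tree. If some leaf hangs at a vertex of degree at least 4, or
if the demand is odd, deleting one leaf saves one edge. Otherwise two leaves are deleted that hang
at the same vertex, or one of which hangs at a vertex of degree 2.

The leaves are put back by subdividing: for each of them an augmenting edge of the smaller tree is
replaced by edges through the new leaf, and the number of augmenting edges grows by one in total.
Connectivity survives because deleting a subdividing vertex costs the smaller graph only the edge it
subdivides, and deleting an edge lowers vertex-connectivity by at most one.
-/

open Finset SimpleGraph

section VertexConnectivity

variable {V : Type*} {G : SimpleGraph V} {k : ℕ}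

/-- `G` is `k`-vertex-connected: `V` is finite with more than `k` vertices, and no set of fewer
than `k` vertices separates `G`. Since `Nat.card V = 0` for infinite `V`, `card_lt` includes the
finiteness of `V`. -/
structure IsVertexConnected (k : ℕ) (G : SimpleGraph V) : Prop where
  card_lt : k < Nat.card V
  preconnected_induce : ∀ S : Finset V, #S < k → (G.induce (S : Set V)ᶜ).Preconnected

/-- No edge of `G` avoiding `S` leaves `A`, i.e. the part of `A` outside `S` is a union of connected
components of `G` with `S` deleted. Connectivity of the latter graph says that the only such parts
are the trivial ones. -/
def IsClosedOff (G : SimpleGraph V) (S A : Set V) : Prop :=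
  ∀ ⦃x y⦄, x ∉ S → y ∉ S → G.Adj x y → x ∈ A → y ∈ A

theorem preconnected_induce_compl_iff {S : Set V} :
    (G.induce Sᶜ).Preconnected ↔
      ∀ A, IsClosedOff G S A → ∀ ⦃x y⦄, x ∉ S → y ∉ S → x ∈ A → y ∈ A := by
  refine ⟨fun h A hA x y hx hy hxA => ?_, fun h x y => ?_⟩
  · obtain ⟨walk⟩ := h ⟨x, hx⟩ ⟨y, hy⟩
    suffices ∀ {u v : ↥Sᶜ}, (G.induce Sᶜ).Walk u v → u.1 ∈ A → v.1 ∈ A from this walk hxA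
    intro u v walk
    induction walk with
    | nil => exact id
    | @cons u v _ huv _ ih => exact fun hu => ih (hA u.2 v.2 huv hu)
  · let component : Set V := {v | ∃ hv : v ∈ Sᶜ, (G.induce Sᶜ).Reachable x ⟨v, hv⟩}
    have closed : IsClosedOff G S component := fun u v _ hv huv ⟨hu, hxu⟩ =>
      ⟨hv, hxu.trans (show (G.induce Sᶜ).Adj ⟨u, hu⟩ ⟨v, hv⟩ from huv).reachable⟩
    exact (h component closed x.2 y.2 ⟨x.2, .rfl⟩).2

namespace IsVertexConnected

theorem mem_of_isClosedOff (h : IsVertexConnected k G) {S : Finset V} (hS : #S < k) {A : Set V}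
    (hA : IsClosedOff G S A) {x y : V} (hx : x ∉ S) (hy : y ∉ S) (hxA : x ∈ A) : y ∈ A :=
  preconnected_induce_compl_iff.1 (h.preconnected_induce S hS) A hA
    (mem_coe.not.2 hx) (mem_coe.not.2 hy) hxA

theorem finite (h : IsVertexConnected k G) : Finite V :=
  Nat.finite_of_card_ne_zero (Nat.ne_zero_of_lt h.card_lt)

theorem exists_notMem (h : IsVertexConnected k G) {S : Finset V} (hS : #S ≤ k) : ∃ v, v ∉ S := by
  have := h.finite
  have := Fintype.ofFinite V
  by_contra! hall
  have hlt := h.card_lt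
  rw [Nat.card_eq_fintype_card, ← card_univ, ← eq_univ_of_forall hall] at hlt
  exact absurd hS hlt.not_ge

theorem threeConnected [Fintype V] (h : IsVertexConnected 3 G) : ThreeConnected G := fun S hS =>
  have ⟨v, hv⟩ := h.exists_notMem (hS.trans (by norm_num))
  have : Nonempty ↥(S : Set V)ᶜ := ⟨⟨v, mem_coe.not.2 hv⟩⟩
  ⟨h.preconnected_induce S (Nat.lt_succ_of_le hS)⟩

theorem exists_adj_notMem (h : IsVertexConnected k G) {v : V} {S : Finset V} (hS : #S < k) :
    ∃ w ∉ S, G.Adj v w := by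
  classical
  by_contra! hnone
  have closed : IsClosedOff G ↑(S.erase v) {v} := by
    rintro x y - hy hxy rfl
    exact absurd hxy (hnone y fun hyS => hy (mem_coe.2 (mem_erase.2 ⟨hxy.ne', hyS⟩)))
  obtain ⟨w, hw⟩ := h.exists_notMem (S := insert v S) (by grind [card_insert_le])
  rw [mem_insert, not_or] at hw
  exact hw.1 (h.mem_of_isClosedOff (card_erase_le.trans_lt hS) closed (notMem_erase v S)
    (fun hwS => hw.2 (mem_of_mem_erase hwS)) rfl)

theorem exists_adj_of_degN_add_card_lt {T H : SimpleGraph V} (h : IsVertexConnected k (T ⊔ H))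
    {v : V} {U : Finset V} (hU : degN T v + #U < k) : ∃ w ∉ U, H.Adj v w := by
  classical
  have := h.finite
  have := Fintype.ofFinite V
  have hcard : #((T.neighborSet v).toFinset ∪ U) < k :=
    (card_union_le _ _).trans_lt (by rwa [← Set.ncard_eq_toFinset_card'])
  obtain ⟨w, hw, hvw⟩ := h.exists_adj_notMem (v := v) hcard
  rw [mem_union, not_or, Set.mem_toFinset] at hw
  exact ⟨w, hw.2, hvw.resolve_left hw.1⟩

theorem deleteEdges_singleton (h : IsVertexConnected (k + 1) G) (e : Sym2 V) :
    IsVertexConnected k (G.deleteEdges {e}) := by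
  classical
  refine ⟨(Nat.lt_succ_self k).trans h.card_lt, fun S hS => ?_⟩
  rw [preconnected_induce_compl_iff]
  intro A hA x y hx hy hxA
  induction e using Sym2.ind with | _ a b
  -- Deleting an end of the edge instead of the edge itself costs one more deleted vertex.
  have off_end (c : V) (hc : c ∈ s(a, b)) {u v : V} (hu : u ∉ insert c S) (hv : v ∉ insert c S) :
      u ∈ A → v ∈ A := by
    refine h.mem_of_isClosedOff ((card_insert_le c S).trans_lt (by lia)) ?_ hu hv
    intro u v hu hv huv
    refine hA (by grind) (by grind) (deleteEdges_adj.2 ⟨huv, ?_⟩)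
    rintro (heq : s(u, v) = s(a, b))
    rw [← heq, Sym2.mem_iff] at hc
    grind
  by_cases hab : a = b
  · refine h.mem_of_isClosedOff (by lia) (fun u v hu hv huv => hA hu hv ?_) hx hy hxA
    refine deleteEdges_adj.2 ⟨huv, ?_⟩
    rintro (heq : s(u, v) = s(a, b))
    exact huv.ne (Sym2.mk_isDiag_iff.1 (heq ▸ Sym2.mk_isDiag_iff.2 hab))
  · obtain ⟨w, hw⟩ := h.exists_notMem (S := insert a (insert b S)) (by grind [card_insert_le])
    have link (z : V) (hz : z ∉ S) : z ∈ A ↔ w ∈ A := by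
      by_cases hza : z = a
      · have hb := @off_end b (Sym2.mem_mk_right a b)
        exact ⟨hb (by grind) (by grind), hb (by grind) (by grind)⟩
      · have ha := @off_end a (Sym2.mem_mk_left a b)
        exact ⟨ha (by grind) (by grind), ha (by grind) (by grind)⟩
    exact (link y hy).2 ((link x hx).1 hxA)

theorem deleteEdges {D : Finset (Sym2 V)} (h : IsVertexConnected (k + #D) G) :
    IsVertexConnected k (G.deleteEdges D) := by
  classical
  induction D using Finset.induction_on generalizing k with
  | empty => simpa only [coe_empty, deleteEdges_empty, card_empty, add_zero] using h
  | insert e D he ih =>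
    rw [card_insert_of_notMem he, ← add_assoc, add_right_comm] at h
    have := (ih h).deleteEdges_singleton e
    rwa [deleteEdges_deleteEdges, Set.union_singleton, ← coe_insert] at this

end IsVertexConnected

end VertexConnectivity

section Subdivision

variable {V : Type*} {W : Set V} {G' : SimpleGraph W} {G : SimpleGraph V} {e : V → Sym2 W} {k : ℕ}

/-- `G` contains a graph obtained from `G'` by subdividing edges: every edge of `G'` is either an
edge of `G` or the edge `e u` for a vertex `u` outside `W`, and such a `u` is adjacent in `G` to
both ends of `e u`. Values of `e` on `W` are irrelevant. -/
structure ContainsSubdivision (e : V → Sym2 W) (G' : SimpleGraph W) (G : SimpleGraph V) :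
    Prop where
  adj_or_exists : ∀ ⦃x y : W⦄, G'.Adj x y → G.Adj x y ∨ ∃ u ∉ W, e u = s(x, y)
  adj_of_mem : ∀ ⦃u⦄, u ∉ W → ∀ x ∈ e u, G.Adj u x

namespace ContainsSubdivision

-- A deleted subdividing vertex only costs `G'` the edge it subdivides, and each deleted edge
-- lowers the connectivity of `G'` by at most one.
theorem mem_of_isClosedOff (hsub : ContainsSubdivision e G' G) (h : IsVertexConnected k G')
    {S : Finset V} (hS : #S < k) {A : Set V} (hA : IsClosedOff G S A) {x y : W}
    (hx : ↑x ∉ S) (hy : ↑y ∉ S) (hxA : ↑x ∈ A) : ↑y ∈ A := by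
  classical
  let deleted : Finset W := S.subtype (· ∈ W)
  let lostEdges : Finset (Sym2 W) := {u ∈ S | u ∉ W}.image e
  have hcard : #deleted + #lostEdges ≤ #S := by
    rw [card_subtype, ← card_filter_add_card_filter_not (s := S) (· ∈ W)]
    exact Nat.add_le_add_left card_image_le _
  have hconn : IsVertexConnected (k - #lostEdges) (G'.deleteEdges lostEdges) :=
    IsVertexConnected.deleteEdges (by rwa [Nat.sub_add_cancel (by lia)])
  refine hconn.mem_of_isClosedOff (S := deleted) (A := (↑) ⁻¹' A) (by lia) ?_
    (by rwa [mem_subtype]) (by rwa [mem_subtype]) hxA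
  intro v w hv hw hvw hvA
  rw [mem_coe, mem_subtype] at hv hw
  rw [deleteEdges_adj] at hvw
  rcases hsub.adj_or_exists hvw.1 with hadj | ⟨u, huW, hu⟩
  · exact hA hv hw hadj hvA
  · have huS : u ∉ S := fun huS =>
      hvw.2 (hu ▸ mem_coe.2 (mem_image_of_mem e (mem_filter.2 ⟨huS, huW⟩)))
    have huv : G.Adj u v := hsub.adj_of_mem huW v (hu ▸ Sym2.mem_mk_left v w)
    have huw : G.Adj u w := hsub.adj_of_mem huW w (hu ▸ Sym2.mem_mk_right v w)
    exact hA huS hw huw (hA hv huS huv.symm hvA)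

theorem isVertexConnected [Finite V] (hsub : ContainsSubdivision e G' G)
    (h : IsVertexConnected k G')
    (hlink : ∀ S : Finset V, #S < k → ∀ u ∉ W, u ∉ S →
      ∃ w ∈ W, w ∉ S ∧ (G.Adj u w ∨ ∃ v ∉ S, G.Adj u v ∧ G.Adj v w)) :
    IsVertexConnected k G := by
  refine ⟨h.card_lt.trans_le (Nat.card_le_card_of_injective _ Subtype.val_injective),
    fun S hS => preconnected_induce_compl_iff.2 fun A hA x y hx hy hxA => ?_⟩
  have exists_branch (u : V) (hu : u ∉ S) : ∃ w : W, ↑w ∉ S ∧ (u ∈ A ↔ ↑w ∈ A) := by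
    have iff_of_adj {x y : V} (hx : x ∉ S) (hy : y ∉ S) (hxy : G.Adj x y) : x ∈ A ↔ y ∈ A :=
      ⟨hA hx hy hxy, hA hy hx hxy.symm⟩
    by_cases huW : u ∈ W
    · exact ⟨⟨u, huW⟩, hu, Iff.rfl⟩
    obtain ⟨w, hwW, hwS, huw | ⟨v, hvS, huv, hvw⟩⟩ := hlink S hS u huW hu
    · exact ⟨⟨w, hwW⟩, hwS, iff_of_adj hu hwS huw⟩
    · exact ⟨⟨w, hwW⟩, hwS, (iff_of_adj hu hvS huv).trans (iff_of_adj hvS hwS hvw)⟩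
  obtain ⟨v, hvS, hxv⟩ := exists_branch x hx
  obtain ⟨w, hwS, hyw⟩ := exists_branch y hy
  exact hyw.2 (hsub.mem_of_isClosedOff h hS hA hvS hwS (hxv.1 hxA))

theorem isVertexConnected_of_card_le [Finite V] {q : V} {e : V → Sym2 ↥({q}ᶜ : Set V)}
    {G' : SimpleGraph ↥({q}ᶜ : Set V)} (hsub : ContainsSubdivision e G' G)
    (h : IsVertexConnected k G') {U : Finset ↥({q}ᶜ : Set V)} (hU : k ≤ #U)
    (hadj : ∀ w ∈ U, G.Adj q w) :
    IsVertexConnected k G := by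
  classical
  refine hsub.isVertexConnected h fun S hS u huW _ => ?_
  obtain rfl : u = q := not_not.1 huW
  have hcard : #(S.subtype (· ∈ ({u}ᶜ : Set V))) < #U := by
    rw [card_subtype]
    exact (card_filter_le _ _).trans_lt (hS.trans_le hU)
  obtain ⟨w, hwU, hwS⟩ := exists_mem_notMem_of_card_lt_card hcard
  exact ⟨w, w.2, fun h => hwS (mem_subtype.2 h), .inl (hadj w hwU)⟩

theorem isVertexConnected_of_adj [Finite V] {q r : V} {e : V → Sym2 ↥({q, r}ᶜ : Set V)}
    {G' : SimpleGraph ↥({q, r}ᶜ : Set V)} (hsub : ContainsSubdivision e G' G)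
    (h : IsVertexConnected 3 G') (hq : e q ∈ G'.edgeSet) (hr : e r ∈ G'.edgeSet)
    (hne : e q ≠ e r) (hqr : G.Adj q r) : IsVertexConnected 3 G := by
  classical
  refine hsub.isVertexConnected h fun S hS => ?_
  have link {u v : V} (hu : u ∈ ({q, r} : Set V)) (hv : v ∈ ({q, r} : Set V))
      (heu : e u ∈ G'.edgeSet) (hev : e v ∈ G'.edgeSet) (hne : e u ≠ e v) (huv : G.Adj u v) :
      ∃ w ∈ ({q, r}ᶜ : Set V), w ∉ S ∧ (G.Adj u w ∨ ∃ v ∉ S, G.Adj u v ∧ G.Adj v w) := by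
    have hadj_u := hsub.adj_of_mem (Set.notMem_compl_iff.2 hu)
    have hadj_v := hsub.adj_of_mem (Set.notMem_compl_iff.2 hv)
    by_cases hlost : ∀ x ∈ e u, ↑x ∈ S
    · -- `S` consists of the ends of `e u`, so neither `v` nor both ends of `e v` are in `S`.
      generalize e u = eu, e v = ev at *
      induction eu using Sym2.ind with | _ a b
      induction ev using Sym2.ind with | _ c d
      have hab : (a : V) ≠ b := fun h => heu.ne (Subtype.ext h)
      have hcd : (c : V) ≠ d := fun h => hev.ne (Subtype.ext h)
      have hS : S = {↑a, ↑b} := (eq_of_subset_of_card_le (by grind) (by grind)).symm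
      have hvS : v ∉ S := by grind
      obtain ⟨x, hx, hxS⟩ : ∃ x ∈ s(c, d), ↑x ∉ S := by grind
      exact ⟨x, x.2, hxS, .inr ⟨v, hvS, huv, hadj_v x hx⟩⟩
    · push Not at hlost
      obtain ⟨x, hx, hxS⟩ := hlost
      exact ⟨x, x.2, hxS, .inl (hadj_u x hx)⟩
  intro u huW _
  rcases Set.notMem_compl_iff.1 huW with rfl | rfl
  · exact link (.inl rfl) (.inr rfl) hq hr hne hqr
  · exact link (.inr rfl) (.inl rfl) hr hq hne.symm hqr.symm

end ContainsSubdivision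

end Subdivision

section Demand

variable {V : Type*} {T : SimpleGraph V}

/-- `q` is a leaf of `T` hanging at `p`. -/
def IsLeafAt (T : SimpleGraph V) (q p : V) : Prop :=
  T.neighborSet q = {p}

namespace IsLeafAt

variable {p q : V}

theorem adj_iff (h : IsLeafAt T q p) {v : V} : T.Adj q v ↔ v = p := by
  rw [← mem_neighborSet, h, Set.mem_singleton_iff]

theorem adj (h : IsLeafAt T q p) : T.Adj q p := h.adj_iff.2 rfl

theorem degN_eq_one (h : IsLeafAt T q p) : degN T q = 1 := by
  rw [degN, h, Set.ncard_singleton]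

theorem mem_compl_pair {p' r v : V} (hq : IsLeafAt T q p) (hr : IsLeafAt T r p')
    (hv : 2 ≤ degN T v) : v ∈ ({q, r}ᶜ : Set V) := by
  rintro (rfl | rfl)
  exacts [absurd hq.degN_eq_one (by lia), absurd hr.degN_eq_one (by lia)]

end IsLeafAt

theorem degN_eq_one_iff {q : V} : degN T q = 1 ↔ ∃ p, IsLeafAt T q p :=
  Set.ncard_eq_one

theorem degN_eq_degree (T : SimpleGraph V) (v : V) [Fintype (T.neighborSet v)] :
    degN T v = T.degree v := by
  rw [degN, Set.ncard_eq_toFinset_card', ← neighborFinset_def, card_neighborFinset_eq_degree]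

theorem one_le_degN [Finite V] [Nontrivial V] (hT : T.Preconnected) (v : V) : 1 ≤ degN T v :=
  (show (T.neighborSet v).Nonempty from hT.exists_adj_of_nontrivial v).ncard_pos

variable [Fintype V]

/-- The number of edge ends that `T` lacks for all its degrees to be at least 3; the truncated
subtraction makes vertices of degree above 3 contribute nothing. -/
noncomputable def demand (T : SimpleGraph V) : ℕ :=
  ∑ v, (3 - degN T v)

theorem sum_degN_add_two (hT : T.IsTree) : ∑ v, degN T v + 2 = 2 * Fintype.card V := by
  classical
  simp_rw [degN_eq_degree, sum_degrees_eq_twice_card_edges]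
  rw [← hT.card_edgeFinset]
  ring

theorem demand_eq_of_one_le_degN (h : ∀ v, 1 ≤ degN T v) :
    demand T = 2 * #{v | degN T v = 1} + #{v | degN T v = 2} := by
  simp only [demand, card_filter, mul_sum, ← sum_add_distrib]
  refine sum_congr rfl fun v _ => ?_
  grind

theorem demand_eq_card_add_two (hT : T.IsTree) (h : ∀ v, degN T v ≤ 3) :
    demand T = Fintype.card V + 2 := by
  have hsum : demand T + ∑ v, degN T v = 3 * Fintype.card V := by
    rw [demand, ← sum_add_distrib, sum_congr rfl fun v _ => Nat.sub_add_cancel (h v), sum_const,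
      smul_eq_mul, card_univ, mul_comm]
  have := sum_degN_add_two hT
  lia

theorem card_three_le_degN_add_two_le (hT : T.IsTree) [Nontrivial V] :
    #{v | 3 ≤ degN T v} + 2 ≤ #{v | degN T v = 1} := by
  have hsum : 2 * Fintype.card V + #{v | 3 ≤ degN T v} ≤ ∑ v, degN T v + #{v | degN T v = 1} := by
    rw [← card_univ, card_eq_sum_ones, mul_sum, card_filter, card_filter, ← sum_add_distrib,
      ← sum_add_distrib]
    refine sum_le_sum fun v _ => ?_
    have := one_le_degN hT.connected.preconnected v
    grind
  have := sum_degN_add_two hT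
  lia

theorem exists_isLeafAt {V : Type*} [Finite V] [Nontrivial V] {T : SimpleGraph V}
    (hT : T.IsTree) : ∃ q p, IsLeafAt T q p := by
  classical
  have := Fintype.ofFinite V
  obtain ⟨q, hq⟩ := hT.exists_vert_degree_one_of_nontrivial
  exact ⟨q, degN_eq_one_iff.1 (by rw [degN_eq_degree, hq])⟩

theorem two_le_degN_of_isLeafAt (hT : T.Preconnected) (hV : 3 ≤ Fintype.card V) {p q : V}
    (hq : IsLeafAt T q p) : 2 ≤ degN T p := by
  classical
  have : Nontrivial V := Fintype.one_lt_card_iff_nontrivial.1 (by lia)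
  by_contra! hlt
  obtain ⟨v, hp⟩ := degN_eq_one_iff.1 (le_antisymm (Nat.le_of_lt_succ hlt) (one_le_degN hT p))
  obtain rfl : q = v := hp.adj_iff.1 hq.adj.symm
  have hrest : (T.induce {q}ᶜ).Preconnected := hT.induce_of_degree_eq_one fun v hv => by
    obtain rfl : v = q := not_not.1 hv
    exact hq ▸ Set.subsingleton_singleton
  have : Nontrivial ↥({q}ᶜ : Set V) := Fintype.one_lt_card_iff_nontrivial.1 (by
    rw [Fintype.card_compl_set, Set.card_singleton]
    lia)
  obtain ⟨w, hw⟩ := hrest.exists_adj_of_nontrivial ⟨p, hq.adj.ne'⟩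
  exact w.2 (hp.adj_iff.1 hw)

theorem exists_isLeafAt_pair (hT : T.IsTree) (hV : 3 ≤ Fintype.card V) :
    ∃ q r p p', q ≠ r ∧ IsLeafAt T q p ∧ IsLeafAt T r p' ∧ (p = p' ∨ degN T p = 2) := by
  have : Nontrivial V := Fintype.one_lt_card_iff_nontrivial.1 (by lia)
  by_cases htwo : ∃ q p, IsLeafAt T q p ∧ degN T p = 2
  · obtain ⟨q, p, hq, hp⟩ := htwo
    have hcard : 1 < #{v | degN T v = 1} := by
      have := card_three_le_degN_add_two_le hT
      lia
    obtain ⟨r, hr, hrq⟩ := exists_mem_ne hcard q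
    obtain ⟨p', hr⟩ := degN_eq_one_iff.1 (mem_filter.1 hr).2
    exact ⟨q, r, p, p', hrq.symm, hq, hr, .inr hp⟩
  · push Not at htwo
    choose! parent hparent using fun v => (degN_eq_one_iff (T := T) (q := v)).1
    have hmaps : Set.MapsTo parent ({v | degN T v = 1} : Finset V)
        ({v | 3 ≤ degN T v} : Finset V) := by
      intro q hq
      have hleaf := hparent q ((mem_filter.1 (mem_coe.1 hq)).2)
      have := two_le_degN_of_isLeafAt hT.connected.preconnected hV hleaf
      have := htwo q _ hleaf
      exact mem_coe.2 ((mem_filter_univ _).2 (by lia))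
    have hcard : #{v | 3 ≤ degN T v} < #{v | degN T v = 1} := by
      have := card_three_le_degN_add_two_le hT
      lia
    obtain ⟨q, hq, r, hr, hqr, heq⟩ := exists_ne_map_eq_of_card_lt_of_maps_to hcard hmaps
    exact ⟨q, r, parent q, parent r, hqr, hparent q ((mem_filter.1 hq).2),
      hparent r (mem_filter.1 hr).2, .inl heq⟩

theorem exists_isLeafAt_of_card_eq_five (hT : T.IsTree) (hV : Fintype.card V = 5)
    (heven : Even (demand T)) : ∃ q p, IsLeafAt T q p ∧ 4 ≤ degN T p := by
  classical
  have : Nontrivial V := Fintype.one_lt_card_iff_nontrivial.1 (by lia)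
  have hbig : ∃ p, 4 ≤ degN T p := by
    by_contra! hsmall
    rw [demand_eq_card_add_two hT fun v => Nat.le_of_lt_succ (hsmall v), hV] at heven
    exact absurd heven (by decide)
  obtain ⟨p, hp⟩ := hbig
  obtain ⟨q, p', hq⟩ := exists_isLeafAt hT
  have hqp : q ≠ p := by
    rintro rfl
    exact absurd hq.degN_eq_one (by lia)
  have hstar : T.Adj p q := by
    have huniv : T.IsUniversal p := by
      rw [← degree_eq_card_sub_one, ← degN_eq_degree]
      have := degN_eq_degree T p ▸ T.degree_lt_card_verts p
      lia
    exact huniv hqp.symm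
  exact ⟨q, p, hq.adj_iff.1 hstar.symm ▸ hq, hp⟩

end Demand

section LeafDeletion

variable {V : Type*} {T : SimpleGraph V} {W : Set V}

theorem isTree_induce_of_leaves (hT : T.IsTree) (hW : W.Nonempty)
    (hleaf : ∀ q ∉ W, ∃ p, IsLeafAt T q p) : (T.induce W).IsTree :=
  have := hW.to_subtype
  { preconnected := hT.connected.preconnected.induce_of_degree_eq_one fun q hq =>
      have ⟨_, hp⟩ := hleaf q hq
      hp ▸ Set.subsingleton_singleton
    isAcyclic := hT.isAcyclic.induce W }

theorem degN_induce_add_ncard [Finite V] (w : W) :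
    degN (T.induce W) w + (T.neighborSet w \ W).ncard = degN T w := by
  have himage : Subtype.val '' (T.induce W).neighborSet w = T.neighborSet w ∩ W := by
    ext v
    simp [and_comm]
  rw [degN, degN, ← Set.ncard_image_of_injective _ Subtype.val_injective, himage]
  exact Set.ncard_inter_add_ncard_sdiff_eq_ncard _ _

theorem degN_induce_add_one [Finite V] (w : W) {q : V} (hq : q ∉ W) (hwq : T.Adj w q) :
    degN (T.induce W) w + 1 ≤ degN T w := by
  rw [← degN_induce_add_ncard w]
  have : (T.neighborSet w \ W).Nonempty := ⟨q, hwq, hq⟩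
  exact Nat.add_le_add_left this.ncard_pos _

theorem degN_le_degN_induce_add_one [Finite V] {q : V} (w : ↥({q}ᶜ : Set V)) :
    degN T w ≤ degN (T.induce {q}ᶜ) w + 1 := by
  rw [← degN_induce_add_ncard w, Set.sdiff_compl]
  exact Nat.add_le_add_left
    ((Set.ncard_le_ncard Set.inter_subset_right).trans (Set.ncard_singleton q).le) _

variable [Fintype V] [Fintype W]

theorem demand_eq_sum_add (hleaf : ∀ q ∉ W, ∃ p, IsLeafAt T q p) :
    demand T = ∑ w : W, (3 - degN T w) + 2 * Wᶜ.ncard := by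
  classical
  have hsum : ∑ q : {q // q ∉ W}, (3 - degN T q) = 2 * Wᶜ.ncard := by
    rw [sum_congr rfl fun q _ => by
      have ⟨_, hp⟩ := hleaf q q.2
      rw [hp.degN_eq_one], sum_const, card_univ, smul_eq_mul, mul_comm, ← Nat.card_eq_fintype_card]
    rfl
  rw [demand, ← hsum]
  convert (Fintype.sum_subtype_add_sum_subtype (· ∈ W) fun v => 3 - degN T v).symm

theorem demand_induce_add_ncard
    (hleaf : ∀ q ∉ W, ∃ p ∈ W, IsLeafAt T q p ∧ degN T p ≤ 3) :
    demand (T.induce W) + Wᶜ.ncard = demand T := by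
  classical
  choose! parent hparentW hparent hdeg using hleaf
  have hterm (w : W) :
      3 - degN (T.induce W) w = (3 - degN T w) + #{q ∈ Wᶜ.toFinset | parent q = w} := by
    have hlost : T.neighborSet w \ W = ({q ∈ Wᶜ.toFinset | parent q = w} : Finset V) := by
      ext q
      have (hq : q ∉ W) : T.Adj w q ↔ parent q = w := by
        rw [adj_comm, (hparent q hq).adj_iff, eq_comm]
      simp only [Set.mem_sdiff, mem_neighborSet, Set.toFinset_compl, coe_filter, mem_compl,
        Set.mem_toFinset, Set.mem_ofPred_eq]
      grind
    have hsplit := degN_induce_add_ncard (T := T) w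
    rw [hlost, Set.ncard_coe_finset] at hsplit
    rcases Finset.eq_empty_or_nonempty {q ∈ Wᶜ.toFinset | parent q = w} with hnone | ⟨q, hq⟩
    · rw [hnone, card_empty] at hsplit ⊢
      lia
    · rw [mem_filter, Set.mem_toFinset] at hq
      have := hdeg q hq.1
      rw [hq.2] at this
      lia
  have hcount : ∑ w : W, #{q ∈ Wᶜ.toFinset | parent q = w} = Wᶜ.ncard := by
    rw [Set.ncard_eq_toFinset_card',
      sum_set_coe W (f := fun w => #{q ∈ Wᶜ.toFinset | parent q = w})]
    exact (card_eq_sum_card_fiberwise fun q hq => by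
      simpa using hparentW q (by simpa using hq)).symm
  rw [demand_eq_sum_add fun q hq => ⟨_, hparent q hq⟩, demand, sum_congr rfl fun w _ => hterm w,
    sum_add_distrib, hcount]
  ring

theorem demand_induce_add_two {p q : V} [Fintype ↥({q}ᶜ : Set V)] (hq : IsLeafAt T q p)
    (hp : 4 ≤ degN T p) : demand (T.induce {q}ᶜ) + 2 = demand T := by
  have hleaf (v : V) (hv : v ∉ ({q}ᶜ : Set V)) : ∃ p, IsLeafAt T v p := ⟨p, not_not.1 hv ▸ hq⟩
  rw [demand_eq_sum_add hleaf, compl_compl, Set.ncard_singleton, demand]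
  refine congrArg (· + 2) (sum_congr rfl fun w _ => ?_)
  by_cases hwp : (w : V) = p
  · have := hwp ▸ hp
    have := degN_le_degN_induce_add_one (T := T) w
    lia
  · have : T.neighborSet w \ {q}ᶜ = ∅ := by
      rw [Set.sdiff_compl, Set.inter_singleton_eq_empty, mem_neighborSet, adj_comm, hq.adj_iff]
      exact hwp
    rw [← degN_induce_add_ncard w, this, Set.ncard_empty, add_zero]

end LeafDeletion

section Augmentation

variable {V : Type*} {T : SimpleGraph V} {W : Set V}

/-- `H` consists of edges outside `T` whose addition to `T` yields a 3-vertex-connected graph. -/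
structure IsAugmentation (T H : SimpleGraph V) : Prop where
  le_compl : H ≤ Tᶜ
  isVertexConnected : IsVertexConnected 3 (T ⊔ H)

/-- `T` becomes 3-vertex-connected upon adding `n` suitable edges. -/
def HasAugmentation (T : SimpleGraph V) (n : ℕ) : Prop :=
  ∃ H, IsAugmentation T H ∧ H.edgeSet.ncard = n

/-- The graph on `V` obtained from the graph `H'` on `W` by replacing the edges in `D` by those
in `N`. -/
def replaceEdges (H' : SimpleGraph W) (D : Set (Sym2 W)) (N : Set (Sym2 V)) : SimpleGraph V :=
  (H'.deleteEdges D).map (Function.Embedding.subtype (· ∈ W)) ⊔ fromEdgeSet N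

section ReplaceEdges

variable {H' : SimpleGraph W} {D : Set (Sym2 W)} {N : Set (Sym2 V)}

theorem replaceEdges_adj_coe {x y : W} (h : H'.Adj x y) (hD : s(x, y) ∉ D) :
    (replaceEdges H' D N).Adj x y :=
  .inl ((map_adj _ _ _ _).2 ⟨x, y, deleteEdges_adj.2 ⟨h, hD⟩, rfl, rfl⟩)

theorem replaceEdges_adj_of_mem {u v : V} (h : s(u, v) ∈ N) (huv : u ≠ v) :
    (replaceEdges H' D N).Adj u v :=
  .inr ((fromEdgeSet_adj N).2 ⟨h, huv⟩)

theorem replaceEdges_le_compl (hH' : H' ≤ (T.induce W)ᶜ) (hN : N ⊆ Tᶜ.edgeSet) :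
    replaceEdges H' D N ≤ Tᶜ := by
  refine sup_le ((map_le_iff_le_comap _ _ _).2 fun x y hxy => ?_) ?_
  · obtain ⟨hne, hT⟩ := hH' (deleteEdges_le D hxy)
    exact ⟨Subtype.coe_ne_coe.2 hne, hT⟩
  · exact (fromEdgeSet_mono hN).trans_eq (fromEdgeSet_edgeSet _)

theorem ncard_edgeSet_replaceEdges_add [Finite V] (hD : D ⊆ H'.edgeSet) (hN : N ⊆ Tᶜ.edgeSet)
    (hNW : ∀ e ∈ N, ∃ u ∈ e, u ∉ W) :
    (replaceEdges H' D N).edgeSet.ncard + D.ncard = H'.edgeSet.ncard + N.ncard := by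
  have hN_edges : (fromEdgeSet N).edgeSet = N := by
    rw [edgeSet_fromEdgeSet, sdiff_eq_left]
    exact Set.disjoint_left.2 fun e he => Tᶜ.not_isDiag_of_mem_edgeSet (hN he)
  have hdisjoint :
      Disjoint ((H'.deleteEdges D).map (Function.Embedding.subtype (· ∈ W))).edgeSet N := by
    refine Set.disjoint_left.2 fun e he heN => ?_
    obtain ⟨u, hu, huW⟩ := hNW e heN
    rw [edgeSet_map] at he
    obtain ⟨e', -, rfl⟩ := he
    obtain ⟨w, -, rfl⟩ := Sym2.mem_map.1 hu
    exact huW w.2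
  rw [replaceEdges, edgeSet_sup, hN_edges, Set.ncard_union_eq hdisjoint, edgeSet_map,
    Set.ncard_image_of_injective _ (Function.Embedding.injective _), edgeSet_deleteEdges,
    add_right_comm, Set.ncard_sdiff_add_ncard_of_subset hD]

theorem HasAugmentation.of_replaceEdges [Finite V] {n : ℕ} (hH' : IsAugmentation (T.induce W) H')
    (hD : D ⊆ H'.edgeSet) (hN : N ⊆ Tᶜ.edgeSet) (hNW : ∀ e ∈ N, ∃ u ∈ e, u ∉ W)
    (hn : n + D.ncard = H'.edgeSet.ncard + N.ncard)
    (hconn : IsVertexConnected 3 (T ⊔ replaceEdges H' D N)) : HasAugmentation T n :=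
  ⟨replaceEdges H' D N, ⟨replaceEdges_le_compl hH'.le_compl hN, hconn⟩,
    Nat.add_right_cancel ((ncard_edgeSet_replaceEdges_add hD hN hNW).trans hn.symm)⟩

theorem containsSubdivision_replaceEdges {e : V → Sym2 W}
    (hD : ∀ d ∈ D, ∃ u ∉ W, e u = d)
    (hadj : ∀ u ∉ W, ∀ x ∈ e u, (T ⊔ replaceEdges H' D N).Adj u x) :
    ContainsSubdivision e (T.induce W ⊔ H') (T ⊔ replaceEdges H' D N) where
  adj_of_mem := hadj
  adj_or_exists x y hxy := by
    by_cases hxyD : s(x, y) ∈ D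
    · exact .inr (hD _ hxyD)
    · exact .inl (hxy.imp id fun h => replaceEdges_adj_coe h hxyD)

theorem containsSubdivision_of_two_leaves {q r : V} {H' : SimpleGraph ↥({q, r}ᶜ : Set V)}
    {p p' b c : ↥({q, r}ᶜ : Set V)} {e : V → Sym2 ↥({q, r}ᶜ : Set V)} (hq : IsLeafAt T q p)
    (hr : IsLeafAt T r p') (heq : e q = s(p, b)) (her : e r = s(p', c)) (hqb : s(q, ↑b) ∈ N)
    (hrc : s(r, ↑c) ∈ N) :
    ContainsSubdivision e (T.induce {q, r}ᶜ ⊔ H')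
      (T ⊔ replaceEdges H' {s(p, b), s(p', c)} N) := by
  refine containsSubdivision_replaceEdges ?_ fun u hu x hx => ?_
  · rintro _ (rfl | rfl)
    exacts [⟨q, not_not.2 (.inl rfl), heq⟩, ⟨r, not_not.2 (.inr rfl), her⟩]
  · rcases not_not.1 hu with rfl | rfl
    · rcases Sym2.mem_iff.1 (heq ▸ hx) with rfl | rfl
      exacts [.inl hq.adj, .inr (replaceEdges_adj_of_mem hqb fun h => x.2 (.inl h.symm))]
    · rcases Sym2.mem_iff.1 (her ▸ hx) with rfl | rfl
      exacts [.inl hr.adj, .inr (replaceEdges_adj_of_mem hrc fun h => x.2 (.inr h.symm))]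

end ReplaceEdges

theorem IsAugmentation.hasAugmentation_of_leaf [Finite V] {q : V}
    {H' : SimpleGraph ↥({q}ᶜ : Set V)} (hH' : IsAugmentation (T.induce {q}ᶜ) H')
    {p a b : ↥({q}ᶜ : Set V)} (hq : IsLeafAt T q p) (hab : H'.Adj a b)
    {U : Finset ↥({q}ᶜ : Set V)} (hU : #U = 3) (hp : p ∈ U) (ha : a ∈ U) (hb : b ∈ U) :
    HasAugmentation T (H'.edgeSet.ncard + 1) := by
  classical
  let N : Set (Sym2 V) := (fun x : ↥({q}ᶜ : Set V) => s(q, ↑x)) '' (U.erase p : Finset _)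
  have hN_card : N.ncard = 2 := by
    rw [Set.ncard_image_of_injective _ fun _ _ h => Subtype.ext (Sym2.congr_right.1 h),
      Set.ncard_coe_finset, card_erase_of_mem hp, hU]
  have hadj (x) (hx : x ∈ U) : (T ⊔ replaceEdges H' {s(a, b)} N).Adj q x := by
    rcases eq_or_ne x p with rfl | hxp
    · exact .inl hq.adj
    · exact .inr (replaceEdges_adj_of_mem ⟨x, mem_erase.2 ⟨hxp, hx⟩, rfl⟩ (Ne.symm x.2))
  have hsub : ContainsSubdivision (fun _ => s(a, b)) (T.induce {q}ᶜ ⊔ H')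
      (T ⊔ replaceEdges H' {s(a, b)} N) := by
    refine containsSubdivision_replaceEdges (fun d hd => ⟨q, not_not.2 rfl, hd.symm⟩) ?_
    intro u hu x hx
    obtain rfl : u = q := not_not.1 hu
    rcases Sym2.mem_iff.1 hx with rfl | rfl
    exacts [hadj _ ha, hadj _ hb]
  refine .of_replaceEdges hH' (Set.singleton_subset_iff.2 hab) ?_ ?_ ?_
    (hsub.isVertexConnected_of_card_le hH'.isVertexConnected hU.ge hadj)
  · rintro _ ⟨x, hx, rfl⟩
    exact ⟨Ne.symm x.2, fun h => ne_of_mem_erase hx (Subtype.ext (hq.adj_iff.1 h))⟩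
  · rintro _ ⟨x, -, rfl⟩
    exact ⟨q, Sym2.mem_mk_left q x, not_not.2 rfl⟩
  · rw [hN_card, Set.ncard_singleton]

theorem IsAugmentation.hasAugmentation_of_two_leaves [Finite V] {q r : V} (hqr : q ≠ r)
    {H' : SimpleGraph ↥({q, r}ᶜ : Set V)} (hH' : IsAugmentation (T.induce {q, r}ᶜ) H')
    {p p' b c : ↥({q, r}ᶜ : Set V)} (hq : IsLeafAt T q p) (hr : IsLeafAt T r p')
    (hpb : H'.Adj p b) (hpc : H'.Adj p' c) (hne : s(p, b) ≠ s(p', c)) :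
    HasAugmentation T (H'.edgeSet.ncard + 1) := by
  classical
  let e (u : V) : Sym2 ↥({q, r}ᶜ : Set V) := if u = q then s(p, b) else s(p', c)
  have heq : e q = s(p, b) := if_pos rfl
  have her : e r = s(p', c) := if_neg hqr.symm
  let N : Set (Sym2 V) := {s(q, ↑b), s(r, ↑c), s(q, r)}
  have hbq : q ≠ b := fun h => b.2 (.inl h.symm)
  have hcr : r ≠ c := fun h => c.2 (.inr h.symm)
  have hN : N ⊆ Tᶜ.edgeSet := by
    rintro _ (rfl | rfl | rfl)
    · exact ⟨hbq, fun h => hpb.ne' (Subtype.ext (hq.adj_iff.1 h))⟩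
    · exact ⟨hcr, fun h => hpc.ne' (Subtype.ext (hr.adj_iff.1 h))⟩
    · exact ⟨hqr, fun h => p.2 (.inr (hq.adj_iff.1 h).symm)⟩
  have hN_card : N.ncard = 3 := by
    have hbr : r ≠ b := fun h => b.2 (.inr h.symm)
    have hcq : q ≠ c := fun h => c.2 (.inl h.symm)
    refine Set.ncard_eq_three.2 ⟨_, _, _, ?_, ?_, ?_, rfl⟩ <;> grind only [Sym2.eq_iff]
  have hsub : ContainsSubdivision e (T.induce {q, r}ᶜ ⊔ H')
      (T ⊔ replaceEdges H' {s(p, b), s(p', c)} N) :=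
    containsSubdivision_of_two_leaves hq hr heq her (.inl rfl) (.inr (.inl rfl))
  refine .of_replaceEdges hH' (Set.pair_subset hpb hpc) hN ?_ ?_
    (hsub.isVertexConnected_of_adj hH'.isVertexConnected (heq ▸ .inr hpb) (her ▸ .inr hpc)
      (by rwa [heq, her]) (.inr (replaceEdges_adj_of_mem (.inr (.inr rfl)) hqr)))
  · rintro _ (rfl | rfl | rfl)
    exacts [⟨q, Sym2.mem_mk_left _ _, not_not.2 (.inl rfl)⟩,
      ⟨r, Sym2.mem_mk_left _ _, not_not.2 (.inr rfl)⟩,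
      ⟨q, Sym2.mem_mk_left _ _, not_not.2 (.inl rfl)⟩]
  · rw [hN_card, Set.ncard_pair hne]

theorem HasAugmentation.of_leaf [Finite V] {p q : V} {n : ℕ} (hT : T.IsTree)
    (hq : IsLeafAt T q p) (h : HasAugmentation (T.induce {q}ᶜ) n) : HasAugmentation T (n + 1) := by
  classical
  obtain ⟨H', hH', rfl⟩ := h
  let p₀ : ↥({q}ᶜ : Set V) := ⟨p, hq.adj.ne'⟩
  rcases le_or_gt (degN T p) 3 with hp | hp
  · have hp₀ := degN_induce_add_one (T := T) p₀ (not_not.2 rfl) hq.adj.symm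
    obtain ⟨b, -, hpb⟩ := hH'.isVertexConnected.exists_adj_of_degN_add_card_lt (v := p₀) (U := ∅)
      (by rw [card_empty]; lia)
    obtain ⟨c, hc⟩ := hH'.isVertexConnected.exists_notMem (S := {p₀, b})
      (card_le_two.trans (by norm_num))
    exact hH'.hasAugmentation_of_leaf (p := p₀) (U := {c, p₀, b}) hq hpb
      (by rw [card_insert_of_notMem hc, card_pair hpb.ne]) (by grind) (by grind) (by grind)
  · have := Fintype.ofFinite V
    have hT' : (T.induce {q}ᶜ).IsTree :=
      isTree_induce_of_leaves hT ⟨p, p₀.2⟩ fun v hv => ⟨p, not_not.1 hv ▸ hq⟩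
    have : Nontrivial ↥({q}ᶜ : Set V) := Finite.one_lt_card_iff_nontrivial.1
      (lt_trans (by norm_num) hH'.isVertexConnected.card_lt)
    obtain ⟨a, _, ha⟩ := exists_isLeafAt hT'
    obtain ⟨b, hbp, hab⟩ := hH'.isVertexConnected.exists_adj_of_degN_add_card_lt (v := a)
      (U := {p₀}) (by rw [ha.degN_eq_one, card_singleton]; norm_num)
    have hpa : p₀ ≠ a := fun hpa => by
      have := degN_le_degN_induce_add_one (T := T) p₀
      rw [hpa, ha.degN_eq_one, ← hpa] at this
      lia
    exact hH'.hasAugmentation_of_leaf (p := p₀) (U := {p₀, a, b}) hq hab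
      (card_eq_three.2 ⟨p₀, a, b, hpa, (notMem_singleton.1 hbp).symm, hab.ne, rfl⟩)
      (by grind) (by grind) (by grind)

theorem HasAugmentation.of_two_leaves [Finite V] {p p' q r : V} {n : ℕ} (hqr : q ≠ r)
    (hq : IsLeafAt T q p) (hr : IsLeafAt T r p') (hpW : p ∈ ({q, r}ᶜ : Set V))
    (hp'W : p' ∈ ({q, r}ᶜ : Set V)) (hp' : degN T p' ≤ 3) (hp : p = p' ∨ degN T p = 2)
    (h : HasAugmentation (T.induce {q, r}ᶜ) n) : HasAugmentation T (n + 1) := by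
  classical
  obtain ⟨H', hH', rfl⟩ := h
  let p₀ : ↥({q, r}ᶜ : Set V) := ⟨p, hpW⟩
  let p₁ : ↥({q, r}ᶜ : Set V) := ⟨p', hp'W⟩
  have hp₁_deg : degN (T.induce {q, r}ᶜ) p₁ ≤ 2 := by
    have := degN_induce_add_one (T := T) p₁ (not_not.2 (.inr rfl)) hr.adj.symm
    lia
  have hp₀_deg : degN (T.induce {q, r}ᶜ) p₀ ≤ 1 := by
    rcases hp with rfl | hp
    · have hsub : ({q, r} : Set V) ⊆ T.neighborSet p \ {q, r}ᶜ := by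
        rw [Set.sdiff_compl, Set.subset_inter_iff, Set.insert_subset_iff, Set.singleton_subset_iff]
        exact ⟨⟨hq.adj.symm, hr.adj.symm⟩, subset_rfl⟩
      have := Set.ncard_le_ncard hsub
      rw [Set.ncard_pair hqr] at this
      have := degN_induce_add_ncard (T := T) p₀
      lia
    · have := degN_induce_add_one (T := T) p₀ (not_not.2 (.inl rfl)) hq.adj.symm
      lia
  obtain ⟨c, -, hpc⟩ := hH'.isVertexConnected.exists_adj_of_degN_add_card_lt (v := p₁) (U := ∅)
    (by rw [card_empty]; lia)
  obtain ⟨b, hb, hpb⟩ := hH'.isVertexConnected.exists_adj_of_degN_add_card_lt (v := p₀)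
    (U := {if p₀ = p₁ then c else p₁}) (by rw [card_singleton]; lia)
  refine hH'.hasAugmentation_of_two_leaves hqr hq hr hpb hpc fun heq => ?_
  rw [mem_singleton] at hb
  grind

end Augmentation

section Induction

variable {V : Type*}

theorem isVertexConnected_top {k : ℕ} (h : k < Nat.card V) :
    IsVertexConnected k (⊤ : SimpleGraph V) where
  card_lt := h
  preconnected_induce S _ := by
    rw [induce_top]
    exact preconnected_top

variable [Fintype V] {T : SimpleGraph V}

theorem ncard_edgeSet_add_ncard_edgeSet_compl (G : SimpleGraph V) :
    G.edgeSet.ncard + Gᶜ.edgeSet.ncard = (Fintype.card V).choose 2 := by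
  classical
  rw [← Set.ncard_union_eq (disjoint_edgeSet.2 disjoint_compl_right), ← edgeSet_sup,
    sup_compl_eq_top, Set.ncard_eq_toFinset_card']
  exact card_edgeFinset_top_eq_card_choose_two

/-- `T` has an augmentation with `⌈demand T / 2⌉` edges, the least number allowed by the degrees. -/
def HasOptimalAugmentation (T : SimpleGraph V) : Prop :=
  HasAugmentation T ((demand T + 1) / 2)

namespace HasOptimalAugmentation

theorem of_card_eq_four (hT : T.IsTree) (hV : Fintype.card V = 4) :
    HasOptimalAugmentation T := by
  classical
  have hdeg (v : V) : degN T v ≤ 3 := by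
    have := T.degree_lt_card_verts v
    rw [degN_eq_degree]
    lia
  refine ⟨Tᶜ, ⟨le_rfl, ?_⟩, ?_⟩
  · rw [sup_compl_eq_top]
    exact isVertexConnected_top (by rw [Nat.card_eq_fintype_card, hV]; norm_num)
  · have hedges : T.edgeSet.ncard + 1 = 4 := by
      rw [Set.ncard_eq_toFinset_card', ← hV]
      exact hT.card_edgeFinset
    have hcompl := ncard_edgeSet_add_ncard_edgeSet_compl T
    rw [hV, show Nat.choose 4 2 = 6 from rfl] at hcompl
    rw [demand_eq_card_add_two hT hdeg, hV]
    lia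

theorem of_leaf_of_four_le {p q : V} [Fintype ↥({q}ᶜ : Set V)] (hT : T.IsTree)
    (hq : IsLeafAt T q p) (hp : 4 ≤ degN T p) (h : HasOptimalAugmentation (T.induce {q}ᶜ)) :
    HasOptimalAugmentation T := by
  rw [HasOptimalAugmentation, ← demand_induce_add_two hq hp, add_right_comm,
    Nat.add_div_right _ two_pos]
  exact .of_leaf hT hq h

theorem of_leaf_of_odd {p q : V} [Fintype ↥({q}ᶜ : Set V)] (hT : T.IsTree)
    (hq : IsLeafAt T q p) (hp : degN T p ≤ 3) (hodd : Odd (demand T))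
    (h : HasOptimalAugmentation (T.induce {q}ᶜ)) : HasOptimalAugmentation T := by
  have hdemand : demand (T.induce {q}ᶜ) + ({q}ᶜᶜ : Set V).ncard = demand T := by
    refine demand_induce_add_ncard fun v hv => ?_
    obtain rfl : v = q := not_not.1 hv
    exact ⟨p, hq.adj.ne', hq, hp⟩
  rw [compl_compl, Set.ncard_singleton] at hdemand
  rw [HasOptimalAugmentation,
    show (demand T + 1) / 2 = (demand (T.induce {q}ᶜ) + 1) / 2 + 1 by grind]
  exact .of_leaf hT hq h

theorem of_two_leaves {p p' q r : V} [Fintype ↥({q, r}ᶜ : Set V)] (hqr : q ≠ r)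
    (hq : IsLeafAt T q p) (hr : IsLeafAt T r p') (hpW : p ∈ ({q, r}ᶜ : Set V))
    (hp'W : p' ∈ ({q, r}ᶜ : Set V)) (hp3 : degN T p ≤ 3) (hp'3 : degN T p' ≤ 3)
    (hp : p = p' ∨ degN T p = 2) (h : HasOptimalAugmentation (T.induce {q, r}ᶜ)) :
    HasOptimalAugmentation T := by
  have hdemand : demand (T.induce {q, r}ᶜ) + ({q, r}ᶜᶜ : Set V).ncard = demand T := by
    refine demand_induce_add_ncard fun v hv => ?_
    rcases not_not.1 hv with rfl | rfl
    exacts [⟨p, hpW, hq, hp3⟩, ⟨p', hp'W, hr, hp'3⟩]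
  rw [compl_compl, Set.ncard_pair hqr] at hdemand
  rw [HasOptimalAugmentation, ← hdemand, add_right_comm, Nat.add_div_right _ two_pos]
  exact .of_two_leaves hqr hq hr hpW hp'W hp'3 hp h

-- Deleting a single leaf below a vertex of degree at most 3 lowers the demand by only 1, which
-- is enough when the demand is odd; when it is even, two leaves are deleted together.
theorem of_forall_induce (hT : T.IsTree) (hV : 5 ≤ Fintype.card V)
    (ih : ∀ (W : Set V) [Fintype W], 4 ≤ Fintype.card W → Fintype.card W < Fintype.card V →
      (T.induce W).IsTree → HasOptimalAugmentation (T.induce W)) :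
    HasOptimalAugmentation T := by
  classical
  have : Nontrivial V := Fintype.one_lt_card_iff_nontrivial.1 (by lia)
  have ih_compl {S : Set V} [Fintype ↥Sᶜ] (hS : S.Nonempty) (hcard : S.ncard + 4 ≤ Fintype.card V)
      (hleaf : ∀ q ∈ S, ∃ p, IsLeafAt T q p) : HasOptimalAugmentation (T.induce Sᶜ) := by
    have hsum := Set.ncard_add_ncard_compl S
    rw [Set.ncard_eq_toFinset_card' Sᶜ, Set.toFinset_card, Nat.card_eq_fintype_card] at hsum
    have hpos := hS.ncard_pos
    have hne : Sᶜ.Nonempty := Set.nonempty_coe_sort.1 (Fintype.card_pos_iff.1 (by lia))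
    exact ih Sᶜ (by lia) (by lia)
      (isTree_induce_of_leaves hT hne fun q hq => hleaf q (not_not.1 hq))
  have ih_leaf {q p : V} (hq : IsLeafAt T q p) : HasOptimalAugmentation (T.induce {q}ᶜ) :=
    ih_compl (Set.singleton_nonempty q) (by rw [Set.ncard_singleton]; lia)
      fun v hv => ⟨p, hv ▸ hq⟩
  by_cases hhigh : ∃ q p, IsLeafAt T q p ∧ 4 ≤ degN T p
  · obtain ⟨q, p, hq, hp⟩ := hhigh
    exact .of_leaf_of_four_le hT hq hp (ih_leaf hq)
  have hlow (q p : V) (hq : IsLeafAt T q p) : degN T p ≤ 3 :=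
    Nat.le_of_lt_succ (not_le.1 fun hp => hhigh ⟨q, p, hq, hp⟩)
  rcases (demand T).even_or_odd with heven | hodd
  · have hV6 : Fintype.card V ≠ 5 := fun h =>
      hhigh (exists_isLeafAt_of_card_eq_five hT h heven)
    obtain ⟨q, r, p, p', hqr, hq, hr, hp⟩ := exists_isLeafAt_pair hT (by lia)
    have hpair : HasOptimalAugmentation (T.induce {q, r}ᶜ) := by
      refine ih_compl (Set.insert_nonempty q {r}) (by rw [Set.ncard_pair hqr]; lia) ?_
      rintro v (rfl | rfl)
      exacts [⟨p, hq⟩, ⟨p', hr⟩]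
    have two_le {q p : V} (hq : IsLeafAt T q p) : 2 ≤ degN T p :=
      two_le_degN_of_isLeafAt hT.connected.preconnected (by lia) hq
    exact .of_two_leaves hqr hq hr (hq.mem_compl_pair hr (two_le hq))
      (hq.mem_compl_pair hr (two_le hr)) (hlow q p hq) (hlow r p' hr) hp hpair
  · obtain ⟨q, p, hq⟩ := exists_isLeafAt hT
    exact .of_leaf_of_odd hT hq (hlow q p hq) hodd (ih_leaf hq)

theorem of_isTree (hT : T.IsTree) (hV : 4 ≤ Fintype.card V) : HasOptimalAugmentation T := by
  induction hn : Fintype.card V using Nat.strong_induction_on generalizing V with | _ n ih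
  rcases (hn ▸ hV).eq_or_lt with hV4 | hV5
  · exact .of_card_eq_four hT (hn.trans hV4.symm)
  · exact .of_forall_induce hT (hn ▸ hV5) fun W _ hW4 hWV hW => ih _ (hn ▸ hWV) hW hW4 rfl

end HasOptimalAugmentation

end Induction

theorem nonpath_augmentation_three_connected_general
    {V : Type*} [Fintype V] (T : SimpleGraph V) (hT : T.IsTree)
    (hn : 4 ≤ Fintype.card V) :
    ∃ F : Finset (Sym2 V),
      (∀ e ∈ F, ¬ e.IsDiag ∧ e ∉ T.edgeSet) ∧
      F.card = (2 * (Finset.univ.filter (fun v => degN T v = 1)).card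
          + (Finset.univ.filter (fun v => degN T v = 2)).card + 1) / 2 ∧
      ThreeConnected (T ⊔ SimpleGraph.fromEdgeSet (F : Set (Sym2 V))) := by
  classical
  have : Nontrivial V := Fintype.one_lt_card_iff_nontrivial.1 (by lia)
  obtain ⟨H, hH, hcard⟩ := HasOptimalAugmentation.of_isTree hT hn
  refine ⟨H.edgeFinset, fun e he => ?_, ?_, ?_⟩
  · rw [mem_edgeFinset] at he
    have hdisjoint : Disjoint H.edgeSet T.edgeSet :=
      disjoint_edgeSet.2 (le_compl_iff_disjoint_right.1 hH.le_compl)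
    exact ⟨H.not_isDiag_of_mem_edgeSet he, hdisjoint.notMem_of_mem_left he⟩
  · rw [← demand_eq_of_one_le_degN (one_le_degN hT.connected.preconnected), ← hcard]
    exact (Set.ncard_eq_toFinset_card' _).symm
  · rw [coe_edgeFinset, fromEdgeSet_edgeSet]
    exact hH.isVertexConnected.threeConnected

/-- For every tree `T` on `n ≥ 4` vertices with maximum degree at least 3 there is an
augmenting set of exactly `⌈(2·l₁ + l₂)/2⌉` non-edges whose addition makes the graph
3-vertex-connected. -/
theorem nonpath_augmentation_three_connected
    {V : Type*} [Fintype V] (T : SimpleGraph V) (hT : T.IsTree)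
    (hn : 4 ≤ Fintype.card V)
    (hdeg3 : ∃ v : V, 3 ≤ degN T v) :
    ∃ F : Finset (Sym2 V),
      (∀ e ∈ F, ¬ e.IsDiag ∧ e ∉ T.edgeSet) ∧
      F.card = (2 * (Finset.univ.filter (fun v => degN T v = 1)).card
          + (Finset.univ.filter (fun v => degN T v = 2)).card + 1) / 2 ∧
      ThreeConnected (T ⊔ SimpleGraph.fromEdgeSet (F : Set (Sym2 V))) :=
  nonpath_augmentation_three_connected_general T hT hn
end
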